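/- Case F1: Let l be a prime with l ≡ 1 (mod 4), let r ≥ 1, and let N = 4 l^r. Suppose p ≡ 3 (mod 4), the multiplicative order of p modulo l^r is φ(l^r), and f = φ(N)/2 (so f = φ(l^r) and 4 divides f). Then there exist integers a, b such that a² + l b² = p^{f/2}, a ≡ -p^{f/4} (mod l), and G(χ) = p^{f/4} (a + b √-l). -/

import Mathlib

open Complex Polynomial IntermediateField

/-- The complex primitive `p`-th root of unity `exp(2πi/p)`. -/
noncomputable def zetaP (p : ℕ) : ℂ := Complex.exp (2 * Real.pi * Complex.I / p)

/-- The Gauss sum `G(χ^λ) = ∑_{x ∈ F, x ≠ 0} χ^λ(x) ζ_p^{T(x)}`, where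
`T` is the trace map from `F` down to `ZMod p`. -/
noncomputable def gaussSumN (p : ℕ) {F : Type} [Field F] [Fintype F] [Algebra (ZMod p) F]
    (χ : MulChar F ℂ) (lam : ℕ) : ℂ :=
  letI : DecidableEq F := Classical.decEq F
  ∑ x ∈ Finset.univ.filter (fun x : F => x ≠ 0),
    (χ ^ lam) x * zetaP p ^ (Algebra.trace (ZMod p) F x).val

/-- `√-m = i√m ∈ ℂ`. -/
noncomputable def sqrtNeg (m : ℕ) : ℂ := Real.sqrt m * Complex.I

theorem sqrtNeg_sq (m : ℕ) : sqrtNeg m ^ 2 = -(m : ℂ) := by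
  have h : ((Real.sqrt m : ℝ) : ℂ) ^ 2 = ((m : ℝ) : ℂ) := by
    rw [← Complex.ofReal_pow, Real.sq_sqrt (by positivity)]
  simp only [sqrtNeg, mul_pow, Complex.I_sq, h]
  push_cast
  ring

theorem isIntegral_sqrtNeg (m : ℕ) : IsIntegral ℚ (sqrtNeg m) := by
  refine ⟨X ^ 2 + C (m : ℚ), monic_X_pow_add_C _ (by norm_num), ?_⟩
  simp [sqrtNeg_sq]

/-- The class number `h(ℚ(√-m))` of the quadratic field `ℚ(√-m) ⊆ ℂ`. -/
noncomputable def classNumSqrtNeg (m : ℕ) : ℕ :=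
  haveI : FiniteDimensional ℚ ℚ⟮sqrtNeg m⟯ :=
    IntermediateField.adjoin.finiteDimensional (isIntegral_sqrtNeg m)
  haveI : CharZero ℚ⟮sqrtNeg m⟯ :=
    charZero_of_injective_algebraMap (algebraMap ℚ ℚ⟮sqrtNeg m⟯).injective
  haveI : NumberField ℚ⟮sqrtNeg m⟯ := ⟨⟩
  NumberField.classNumber ℚ⟮sqrtNeg m⟯

/-- `√p* = √p` if `p ≡ 1 (mod 4)` and `i√p` if `p ≡ 3 (mod 4)`. -/
noncomputable def sqrtPStar (p : ℕ) : ℂ :=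
  if p % 4 = 1 then (Real.sqrt p : ℂ) else (Real.sqrt p : ℂ) * Complex.I

/-!
Raising to the power `p` permutes `F` and preserves the trace, so `G(χ ^ p) = G(χ)`. Every unit
modulo `N = 4 l ^ r` is `± p ^ j`, so a field automorphism sends `G(χ)` to `G(χ)` or to `G(χ⁻¹)`;
comparing with the quadratic Gauss sum modulo `l`, it fixes `√-l` in the first case and negates it
in the second. Hence `G(χ) + G(χ⁻¹)` and `(G(χ) - G(χ⁻¹)) √-l` are rational.

As `p ^ (f / 2)` is `-1` modulo `N / 2`, the Gauss sum of `χ ^ 2` has square `p ^ f`. Since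
`G(χ) ^ 2` is that Gauss sum times a Jacobi sum, `G(χ) / p ^ (f / 4)` is an algebraic integer, and
so `G(χ) = p ^ (f / 4) (a + b √-l)`; the norm equation is `G(χ) G(χ⁻¹) = p ^ f`.

Modulo a prime above `l`, `p ^ (f / 4) a ≡ G(χ)`, and its power of exponent `l ^ r` is
`G(χ ^ (l ^ r))`. As `χ ^ (l ^ r)` has order `4`, which divides `p + 1`, the Hasse–Davenport
relation gives `G(χ ^ (l ^ r)) = -p ^ (f / 2)`.
-/

section MulCharFiniteField

variable {F : Type*} [Field F] [Fintype F] {R : Type*} [CommRing R]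

theorem mulChar_apply_eq_one_of_pow_eq_one (χ : MulChar F R) {m d : ℕ}
    (hmd : m * d = Fintype.card F - 1) (hχ : χ ^ m = 1) {x : F} (hx₀ : x ≠ 0) (hx : x ^ d = 1) :
    χ x = 1 := by
  obtain ⟨g, hg⟩ := IsCyclic.exists_monoid_generator (α := Fˣ)
  obtain ⟨j, hj⟩ := hg (Units.mk0 x hx₀)
  have orderOf_g : orderOf g = m * d := by
    rw [hmd, orderOf_eq_card_of_forall_mem_powers hg, Nat.card_units, Nat.card_eq_fintype_card]
  have hd : 0 < d := Nat.pos_of_ne_zero fun h ↦ by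
    have := Fintype.one_lt_card (α := F)
    simp only [h, mul_zero] at hmd
    omega
  have gen_pow : (g : F) ^ j = x := by simpa using congrArg Units.val hj
  have hgj : g ^ (j * d) = 1 := by
    ext
    simp [pow_mul, gen_pow, hx]
  obtain ⟨i, rfl⟩ := Nat.dvd_of_mul_dvd_mul_right hd (orderOf_g ▸ orderOf_dvd_of_pow_eq_one hgj)
  rw [← gen_pow, map_pow, pow_mul, ← MulChar.pow_apply_coe, hχ, MulChar.one_apply_coe, one_pow]

theorem mulChar_natCast_eq_one {p N m : ℕ} [Fact p.Prime] [CharP F p] {χ : MulChar F R}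
    (hχ : χ ^ N = 1) (hN : N * (p - 1) ∣ Fintype.card F - 1) (hm : (m : F) ≠ 0) : χ m = 1 := by
  obtain ⟨k, hk⟩ := hN
  have hm_pow : (m : F) ^ (p - 1) = 1 := by
    have hm0 : (m : ZMod p) ≠ 0 := fun h ↦ hm (by
      rwa [ZMod.natCast_eq_zero_iff, ← CharP.cast_eq_zero_iff F p] at h)
    simpa only [map_pow, map_natCast, map_one] using
      congrArg (ZMod.castHom dvd_rfl F) (ZMod.pow_card_sub_one_eq_one hm0)
  exact mulChar_apply_eq_one_of_pow_eq_one χ (m := N * k) (by rw [hk]; ring)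
    (by rw [pow_mul, hχ, one_pow]) hm hm_pow

theorem isIntegral_mulChar_apply {F R : Type*} [Field F] [Finite F] [CommRing R]
    (χ : MulChar F R) (x : F) : IsIntegral ℤ (χ x) := by
  have := Fintype.ofFinite F
  rcases eq_or_ne x 0 with rfl | hx
  · rw [MulChar.map_zero]
    exact isIntegral_zero
  · refine .of_pow (n := Fintype.card F - 1) (Nat.sub_pos_of_lt Fintype.one_lt_card) ?_
    rw [← map_pow, FiniteField.pow_card_sub_one_eq_one x hx, map_one]
    exact isIntegral_one

theorem mulChar_neg_one_eq_one {F R : Type*} [Field F] [Finite F] [CommRing R] {χ : MulChar F R}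
    (hχ : ∀ m : ℕ, (m : F) ≠ 0 → χ m = 1) : χ (-1) = 1 := by
  obtain ⟨p, _⟩ := CharP.exists F
  have hneg : ((p - 1 : ℕ) : F) = -1 := by
    rw [Nat.cast_pred (CharP.char_is_prime F p).pos, CharP.cast_eq_zero, zero_sub]
  rw [← hneg]
  exact hχ _ (by rw [hneg]; exact neg_ne_zero.2 one_ne_zero)

end MulCharFiniteField

section GaussSum

variable {A : Type*} [CommRing A] [Fintype A] {R S : Type*} [CommRing R] [CommRing S]

theorem gaussSum_ringHomComp_compAddChar (f : R →+* S) (χ : MulChar A R) (ψ : AddChar A R) :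
    gaussSum (χ.ringHomComp f) ((f : R →* S).compAddChar ψ) = f (gaussSum χ ψ) := by
  simp [gaussSum, MulChar.ringHomComp_apply]

theorem gaussSum_mulShift_of_apply_eq_one (χ : MulChar A R) (ψ : AddChar A R) {a : A}
    (ha : IsUnit a) (hχa : χ a = 1) : gaussSum χ (ψ.mulShift a) = gaussSum χ ψ := by
  obtain ⟨u, rfl⟩ := ha
  rw [← gaussSum_mulShift χ ψ u, hχa, one_mul]

theorem gaussSum_pow_charP_pow [IsDomain A] (p : ℕ) [Fact p.Prime] [CharP A p] {ψ : AddChar A R}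
    (hψ : ∀ x, ψ (x ^ p) = ψ x) (χ : MulChar A R) (j : ℕ) :
    gaussSum (χ ^ p ^ j) ψ = gaussSum χ ψ := by
  induction j with
  | zero => simp
  | succ j ih =>
    rw [← ih, pow_succ, pow_mul]
    refine Fintype.sum_bijective (frobenius A p)
      (Finite.injective_iff_bijective.1 (frobenius_inj A p)) _ _ fun x ↦ ?_
    rw [frobenius_def, hψ, map_pow, MulChar.pow_apply' _ (Fact.out : p.Prime).ne_zero]

variable {F : Type*} [Field F] [Fintype F] [IsDomain R]

theorem gaussSum_mul_gaussSum_inv {χ : MulChar F R} (hχ : χ ≠ 1) {ψ : AddChar F R}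
    (hψ : ψ.IsPrimitive) : gaussSum χ ψ * gaussSum χ⁻¹ ψ = χ (-1) * Fintype.card F := by
  have hinv : χ⁻¹ (-1) = χ (-1) := by
    rw [MulChar.inv_apply', inv_neg_one]
  rw [← gaussSum_mul_gaussSum_eq_card hχ hψ, ← mul_gaussSum_inv_eq_gaussSum χ⁻¹ ψ, hinv]
  ring

theorem gaussSum_sq_of_pow_charP_pow_eq_inv (p : ℕ) [Fact p.Prime] [CharP F p] {χ : MulChar F R}
    (hχ : χ ≠ 1) {ψ : AddChar F R} (hψ : ψ.IsPrimitive) (hψp : ∀ x, ψ (x ^ p) = ψ x) {j : ℕ}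
    (hj : χ ^ p ^ j = χ⁻¹) : gaussSum χ ψ ^ 2 = χ (-1) * Fintype.card F := by
  rw [← gaussSum_mul_gaussSum_inv hχ hψ, ← hj, gaussSum_pow_charP_pow p hψp, sq]

end GaussSum

section QuadraticExtension

variable {E F : Type*} [Field E] [Field F] [Algebra E F]

theorem mulChar_pow_eq_one_iff_of_norm_eq [Finite F] {R : Type*} [CommRing R]
    {χ : MulChar E R} {χF : MulChar F R} (hχF : ∀ x, χF x = χ (Algebra.norm E x)) (k : ℕ) :
    χF ^ k = 1 ↔ χ ^ k = 1 := by
  simp only [MulChar.ext_iff, MulChar.pow_apply_coe, MulChar.one_apply_coe,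
    (FiniteField.unitsMap_norm_surjective E F).forall, hχF]
  rfl

variable [Fintype E]

theorem add_mul_pow_card {d : F} (hdq : d ^ Fintype.card E = -d) (u v : E) :
    (algebraMap E F u + algebraMap E F v * d) ^ Fintype.card E =
      algebraMap E F u - algebraMap E F v * d := by
  have := map_add (FiniteField.frobeniusAlgHom E F) (algebraMap E F u) (algebraMap E F v * d)
  simpa [hdq, sub_eq_add_neg, mul_pow, ← map_pow, FiniteField.pow_card] using this

variable [Fintype F]

theorem finrank_eq_two_of_card_eq_sq (hcard : Fintype.card F = Fintype.card E ^ 2) :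
    Module.finrank E F = 2 :=
  Nat.pow_right_injective Fintype.one_lt_card
    ((Module.card_eq_pow_finrank (K := E) (V := F)).symm.trans hcard)

theorem algebraMap_trace_of_card_eq_sq (hcard : Fintype.card F = Fintype.card E ^ 2) (x : F) :
    algebraMap E F (Algebra.trace E F x) = x + x ^ Fintype.card E := by
  rw [FiniteField.algebraMap_trace_eq_sum_pow, finrank_eq_two_of_card_eq_sq hcard]
  simp [Finset.sum_range_succ]

theorem algebraMap_norm_of_card_eq_sq (hcard : Fintype.card F = Fintype.card E ^ 2) (x : F) :
    algebraMap E F (Algebra.norm E x) = x * x ^ Fintype.card E := by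
  have hE : 0 < Fintype.card E - 1 := Nat.sub_pos_of_lt Fintype.one_lt_card
  have hfactor : Fintype.card F - 1 = (Fintype.card E + 1) * (Fintype.card E - 1) := by
    rw [hcard, ← Nat.sq_sub_sq, one_pow]
  rw [FiniteField.algebraMap_norm_eq_pow, Nat.card_eq_fintype_card, Nat.card_eq_fintype_card,
    hfactor, Nat.mul_div_cancel _ hE, pow_succ']

theorem exists_pow_card_eq_neg (h2 : ringChar E ≠ 2)
    (hcard : Fintype.card F = Fintype.card E ^ 2) :
    ∃ (δ : E) (d : F), ¬IsSquare δ ∧ d ^ 2 = algebraMap E F δ ∧ d ^ Fintype.card E = -d := by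
  obtain ⟨δ, hδ⟩ := FiniteField.exists_nonsquare h2
  have hδ₀ : δ ≠ 0 := fun h ↦ hδ (h ▸ .zero)
  have hodd : Fintype.card E % 2 = 1 := FiniteField.odd_card_of_char_ne_two h2
  have hδpow : δ ^ (Fintype.card E / 2) = -1 :=
    (FiniteField.pow_dichotomy h2 hδ₀).resolve_left fun h ↦
      hδ ((FiniteField.isSquare_iff h2 hδ₀).2 h)
  have h2F : ringChar F ≠ 2 := by rwa [← Algebra.ringChar_eq E F]
  have hsq : IsSquare (algebraMap E F δ) := by
    rw [FiniteField.isSquare_iff h2F (by simpa using hδ₀), ← map_pow, hcard]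
    have hhalf : Fintype.card E ^ 2 / 2 = Fintype.card E / 2 * (Fintype.card E + 1) := by
      obtain ⟨m, hm⟩ := Nat.odd_iff.2 hodd
      rw [hm, show (2 * m + 1) ^ 2 = 2 * (m * (2 * m + 1 + 1)) + 1 by ring,
        show (2 * m + 1) / 2 = m by omega]
      omega
    rw [hhalf, pow_mul, hδpow, Even.neg_one_pow (by rw [Nat.even_iff]; omega), map_one]
  obtain ⟨d, hd⟩ := hsq
  have hdsq : d ^ 2 = algebraMap E F δ := by rw [hd, sq]
  refine ⟨δ, d, hδ, hdsq, ?_⟩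
  rw [← Nat.div_add_mod (Fintype.card E) 2, hodd, pow_succ, pow_mul, hdsq, ← map_pow, hδpow]
  simp

theorem bijective_add_mul_of_not_isSquare (hcard : Fintype.card F = Fintype.card E ^ 2) {δ : E}
    {d : F} (hδ : ¬IsSquare δ) (hd : d ^ 2 = algebraMap E F δ) :
    Function.Bijective fun x : E × E ↦ algebraMap E F x.1 + algebraMap E F x.2 * d := by
  rw [Fintype.bijective_iff_injective_and_card]
  refine ⟨fun x y hxy ↦ ?_, by simp [hcard, sq]⟩
  have hdiff : algebraMap E F (x.1 - y.1) = algebraMap E F (y.2 - x.2) * d := by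
    simp only [map_sub]
    linear_combination hxy
  have h₂ : y.2 - x.2 = 0 := by
    by_contra hne
    refine hδ ⟨(x.1 - y.1) / (y.2 - x.2), (algebraMap E F).injective ?_⟩
    have : algebraMap E F (y.2 - x.2) ≠ 0 := by rwa [Ne, map_eq_zero]
    rw [map_mul, map_div₀, hdiff, mul_div_cancel_left₀ _ this, ← hd, sq]
  have h₁ : x.1 - y.1 = 0 := by
    rwa [h₂, map_zero, zero_mul, map_eq_zero] at hdiff
  exact Prod.ext (sub_eq_zero.1 h₁) (sub_eq_zero.1 h₂).symm

theorem trace_add_mul (hcard : Fintype.card F = Fintype.card E ^ 2) {d : F}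
    (hdq : d ^ Fintype.card E = -d) (u v : E) :
    Algebra.trace E F (algebraMap E F u + algebraMap E F v * d) = 2 * u := by
  apply (algebraMap E F).injective
  rw [algebraMap_trace_of_card_eq_sq hcard, add_mul_pow_card hdq, map_mul, map_ofNat]
  ring

theorem norm_add_mul (hcard : Fintype.card F = Fintype.card E ^ 2) {δ : E} {d : F}
    (hd : d ^ 2 = algebraMap E F δ) (hdq : d ^ Fintype.card E = -d) (u v : E) :
    Algebra.norm E (algebraMap E F u + algebraMap E F v * d) = u ^ 2 - δ * v ^ 2 := by
  apply (algebraMap E F).injective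
  rw [algebraMap_norm_of_card_eq_sq hcard, add_mul_pow_card hdq, map_sub, map_mul, map_pow,
    map_pow, ← hd]
  ring

variable {M : Type*} [AddCommGroup M]

theorem sum_comp_sq (h2 : ringChar E ≠ 2) [DecidableEq E] (h : E → M) :
    ∑ v, h (v ^ 2) = ∑ m, (quadraticChar E m + 1) • h m := by
  rw [← Finset.sum_fiberwise Finset.univ fun v : E ↦ v ^ 2]
  refine Finset.sum_congr rfl fun m _ ↦ ?_
  rw [Finset.sum_congr rfl fun v hv ↦ by rw [(Finset.mem_filter.1 hv).2], Finset.sum_const,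
    ← quadraticChar_card_sqrts h2 m, natCast_zsmul, Set.toFinset_ofPred]

theorem sum_sq_add_sum_mul_sq (h2 : ringChar E ≠ 2) {δ : E} (hδ : ¬IsSquare δ) (h : E → M) :
    ∑ v, h (v ^ 2) + ∑ v, h (δ * v ^ 2) = 2 • ∑ m, h m := by
  classical
  have hδ₀ : δ ≠ 0 := fun h ↦ hδ (h ▸ .zero)
  have hmul : ∑ m, (quadraticChar E m + 1) • h (δ * m) =
      ∑ m, (1 - quadraticChar E m) • h m := by
    refine Fintype.sum_equiv (Equiv.mulLeft₀ δ hδ₀) _ _ fun m ↦ ?_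
    rw [Equiv.mulLeft₀_apply, map_mul, quadraticChar_neg_one_iff_not_isSquare.2 hδ]
    ring_nf
  rw [sum_comp_sq h2 h, sum_comp_sq h2 fun m ↦ h (δ * m), hmul, ← Finset.sum_add_distrib,
    Finset.smul_sum]
  refine Finset.sum_congr rfl fun m _ ↦ ?_
  rw [← add_smul]
  ring_nf
  exact ofNat_zsmul _ _

theorem sum_add_mul_eq_sum_sq_sub_sq (h2 : ringChar E ≠ 2) (g : E → E → M) :
    ∑ x : E × E, g (x.1 + x.2) (x.1 * x.2) = ∑ u, ∑ v, g (2 * u) (u ^ 2 - v ^ 2) := by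
  have two_ne : (2 : E) ≠ 0 := Ring.two_ne_zero h2
  have hinj : Function.Injective fun x : E × E ↦ (x.1 + x.2, x.1 - x.2) := fun x y hxy ↦ by
    obtain ⟨hadd, hsub⟩ := Prod.ext_iff.1 hxy
    exact Prod.ext (mul_left_cancel₀ two_ne (by linear_combination hadd + hsub))
      (mul_left_cancel₀ two_ne (by linear_combination hadd - hsub))
  rw [← (Finite.injective_iff_bijective.1 hinj).sum_comp, Fintype.sum_prod_type]
  refine Finset.sum_congr rfl fun u _ ↦ Finset.sum_congr rfl fun v _ ↦ ?_
  ring_nf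

/- Both sums run over the quadratic polynomials `X ^ 2 - t X + m`, weighted by their roots: a
pair of conjugates outside `E` or an ordered pair of roots in `E`, two in either case. -/
theorem sum_trace_norm_add_sum_add_mul (h2 : ringChar E ≠ 2)
    (hcard : Fintype.card F = Fintype.card E ^ 2) (g : E → E → M) :
    ∑ x : F, g (Algebra.trace E F x) (Algebra.norm E x) + ∑ x : E × E, g (x.1 + x.2) (x.1 * x.2) =
      2 • ∑ t, ∑ m, g t m := by
  obtain ⟨δ, d, hδ, hd, hdq⟩ := exists_pow_card_eq_neg h2 hcard
  have hF : ∑ x : F, g (Algebra.trace E F x) (Algebra.norm E x) =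
      ∑ u, ∑ v, g (2 * u) (u ^ 2 - δ * v ^ 2) := by
    rw [← (bijective_add_mul_of_not_isSquare hcard hδ hd).sum_comp, Fintype.sum_prod_type]
    simp only [trace_add_mul hcard hdq, norm_add_mul hcard hd hdq]
  rw [hF, sum_add_mul_eq_sum_sq_sub_sq h2, add_comm, ← Finset.sum_add_distrib, Finset.smul_sum,
    ← Equiv.sum_comp (Equiv.mulLeft₀ 2 (Ring.two_ne_zero h2)) fun t ↦ 2 • ∑ m, g t m]
  refine Finset.sum_congr rfl fun u _ ↦ ?_
  rw [sum_sq_add_sum_mul_sq h2 hδ fun m ↦ g (2 * u) (u ^ 2 - m), Equiv.mulLeft₀_apply,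
    ← (Equiv.subLeft (u ^ 2)).sum_comp (g (2 * u))]
  simp only [Equiv.subLeft_apply]

variable {R : Type*} [CommRing R]

theorem exists_mulChar_norm_eq (hcard : Fintype.card F = Fintype.card E ^ 2) {χF : MulChar F R}
    (hχF : χF ^ (Fintype.card E - 1) = 1) :
    ∃ χ : MulChar E R, ∀ x, χF x = χ (Algebra.norm E x) := by
  have hker : (Units.map (Algebra.norm E (S := F))).ker ≤ χF.toUnitHom.ker := fun u hu ↦ by
    have hnorm : (u : F) ^ (Fintype.card E + 1) = 1 := by
      have : Algebra.norm E (u : F) = 1 := congrArg Units.val hu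
      rw [pow_succ', ← algebraMap_norm_of_card_eq_sq hcard, this, map_one]
    rw [MonoidHom.mem_ker, Units.ext_iff, MulChar.coe_toUnitHom]
    refine mulChar_apply_eq_one_of_pow_eq_one χF ?_ hχF u.ne_zero hnorm
    rw [hcard, mul_comm, ← Nat.sq_sub_sq, one_pow]
  refine ⟨MulChar.ofUnitHom (MonoidHom.liftOfSurjective _
    (FiniteField.unitsMap_norm_surjective E F) ⟨_, hker⟩), fun x ↦ ?_⟩
  rcases eq_or_ne x 0 with rfl | hx
  · rw [MulChar.map_zero, Algebra.norm_zero, MulChar.map_zero]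
  · lift x to Fˣ using hx.isUnit
    rw [← Units.coe_map, MulChar.ofUnitHom_coe, MonoidHom.liftOfRightInverse_comp_apply]
    rfl

variable [IsDomain R]

/- The case of degree two of the Hasse–Davenport relation. -/
theorem gaussSum_norm_trace_eq_neg_sq (h2 : ringChar E ≠ 2)
    (hcard : Fintype.card F = Fintype.card E ^ 2) {χ : MulChar E R} (hχ : χ ≠ 1) (ψ : AddChar E R)
    {χF : MulChar F R} (hχF : ∀ x, χF x = χ (Algebra.norm E x)) {ψF : AddChar F R}
    (hψF : ∀ x, ψF x = ψ (Algebra.trace E F x)) :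
    gaussSum χF ψF = -gaussSum χ ψ ^ 2 := by
  have hsum := sum_trace_norm_add_sum_add_mul h2 hcard fun t m ↦ χ m * ψ t
  have hzero : ∑ t, ∑ m, χ m * ψ t = 0 := by
    simp only [← Finset.sum_mul, MulChar.sum_eq_zero_of_ne_one hχ, zero_mul, Finset.sum_const_zero]
  have hsq : gaussSum χ ψ ^ 2 = ∑ x : E × E, χ (x.1 * x.2) * ψ (x.1 + x.2) := by
    rw [sq, gaussSum, Finset.sum_mul_sum, Fintype.sum_prod_type]
    simp only [map_mul, AddChar.map_add_eq_mul, mul_mul_mul_comm]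
  rw [hzero, smul_zero] at hsum
  simp only [gaussSum, hχF, hψF]
  rw [← gaussSum, hsq, eq_neg_iff_add_eq_zero, hsum]

end QuadraticExtension

section TraceCharacter

variable (p : ℕ) [Fact p.Prime] (F : Type*) [Field F] [Algebra (ZMod p) F]

/-- The additive character `x ↦ exp(2πi T(x) / p)` of a finite field `F` of characteristic `p`,
where `T` is the trace from `F` to the prime field. -/
noncomputable def traceChar : AddChar F ℂ :=
  (ZMod.stdAddChar (N := p)).compAddMonoidHom (Algebra.trace (ZMod p) F).toAddMonoidHom

variable {F}

theorem traceChar_apply (x : F) :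
    traceChar p F x = ZMod.stdAddChar (Algebra.trace (ZMod p) F x) :=
  rfl

theorem traceChar_apply_eq_zetaP_pow (x : F) :
    traceChar p F x = zetaP p ^ (Algebra.trace (ZMod p) F x).val := by
  rw [traceChar_apply, zetaP, ← Complex.exp_nat_mul, ZMod.stdAddChar_apply, ZMod.toCircle_apply]
  congr 1
  ring

theorem gaussSumN_one {F : Type} [Field F] [Fintype F] [Algebra (ZMod p) F] (χ : MulChar F ℂ) :
    gaussSumN p χ 1 = gaussSum χ (traceChar p F) := by
  classical
  rw [gaussSumN, Finset.sum_filter]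
  refine Finset.sum_congr rfl fun x _ ↦ ?_
  rcases eq_or_ne x 0 with rfl | hx
  · rw [if_neg (not_not.2 rfl), MulChar.map_zero, zero_mul]
  · rw [if_pos hx, traceChar_apply_eq_zetaP_pow, pow_one]

variable [Finite F]

theorem traceChar_pow_char (x : F) : traceChar p F (x ^ p) = traceChar p F x := by
  have : CharP F p := charP_of_injective_algebraMap (algebraMap (ZMod p) F).injective p
  have := Algebra.trace_eq_of_algEquiv (FiniteField.frobeniusAlgEquiv (ZMod p) F p) x
  rw [FiniteField.frobeniusAlgEquiv_apply, ZMod.card] at this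
  rw [traceChar_apply, this, traceChar_apply]

theorem isPrimitive_traceChar : (traceChar p F).IsPrimitive := by
  refine .of_ne_one fun h ↦ ?_
  obtain ⟨x, hx⟩ := Algebra.trace_surjective (ZMod p) F 1
  have hx1 : ZMod.stdAddChar (1 : ZMod p) = 1 := by
    rw [← hx, ← traceChar_apply, h, AddChar.one_apply]
  exact one_ne_zero (ZMod.injective_stdAddChar (hx1.trans (AddChar.map_zero_eq_one _).symm))

theorem traceChar_algebraTrace {E : Type*} [Field E] [Algebra (ZMod p) E] [Algebra E F]
    (x : F) : traceChar p E (Algebra.trace E F x) = traceChar p F x := by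
  have : IsScalarTower (ZMod p) E F := .of_algebraMap_eq' (RingHom.ext_zmod _ _)
  have : Finite E := .of_injective _ (algebraMap E F).injective
  rw [traceChar_apply, Algebra.trace_trace, traceChar_apply]

variable {F : Type*} [Field F] [Fintype F] [Algebra (ZMod p) F]

theorem gaussSum_traceChar_sq_of_pow_eq_one (hp2 : p ≠ 2) {n : ℕ}
    (hcard : Fintype.card F = p ^ (2 * n)) {χ : MulChar F ℂ} (hχ : χ ≠ 1) (hχp : χ ^ (p + 1) = 1) :
    gaussSum χ (traceChar p F) ^ 2 = (p : ℂ) ^ (2 * n) := by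
  have : CharP F p := charP_of_injective_algebraMap (algebraMap (ZMod p) F).injective p
  obtain ⟨k, hk⟩ : p ^ 2 - 1 ∣ p ^ (2 * n) - 1 := by
    simpa [pow_mul] using Nat.sub_dvd_pow_sub_pow (p ^ 2) 1 n
  have hfactor : (p + 1) * ((p - 1) * k) = Fintype.card F - 1 := by
    rw [hcard, hk, ← mul_assoc, ← Nat.sq_sub_sq, one_pow]
  have heven : Even ((p - 1) * k) :=
    ((Fact.out : p.Prime).even_sub_one hp2).mul_right k
  have hneg : χ (-1) = 1 := mulChar_apply_eq_one_of_pow_eq_one χ hfactor hχp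
    (neg_ne_zero.2 one_ne_zero) heven.neg_one_pow
  have hinv : χ ^ p ^ 1 = χ⁻¹ := by rw [pow_one, eq_inv_iff_mul_eq_one, ← pow_succ, hχp]
  rw [gaussSum_sq_of_pow_charP_pow_eq_inv p hχ (isPrimitive_traceChar p) (traceChar_pow_char p)
    hinv, hneg, hcard, one_mul, Nat.cast_pow]

theorem exists_algebra_of_card_eq_pow {m k : ℕ} (hcard : Fintype.card F = p ^ k) (hmk : m ∣ k) :
    ∃ (E : Type) (_ : Field E) (_ : Fintype E) (_ : Algebra (ZMod p) E) (_ : Algebra E F),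
      Fintype.card E = p ^ m := by
  have hk : k ≠ 0 := by
    rintro rfl
    exact Fintype.one_lt_card.ne' (hcard.trans (pow_zero p))
  have hm : m ≠ 0 := ne_zero_of_dvd_ne_zero hk hmk
  have hfinrank : Module.finrank (ZMod p) F = k := by
    rw [Module.card_eq_pow_finrank (K := ZMod p), ZMod.card] at hcard
    exact Nat.pow_right_injective (Fact.out : p.Prime).one_lt hcard
  have : Fintype (GaloisField p m) := Fintype.ofFinite _
  obtain ⟨ι⟩ : Nonempty (GaloisField p m →ₐ[ZMod p] F) :=
    FiniteField.nonempty_algHom_of_finrank_dvd (by rwa [hfinrank, GaloisField.finrank p hm])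
  refine ⟨GaloisField p m, inferInstance, inferInstance, inferInstance, ι.toRingHom.toAlgebra, ?_⟩
  rw [← Nat.card_eq_fintype_card, GaloisField.card p m hm]

/- `F` is quadratic over the field `E` with `p ^ (2 * n)` elements, and `χ` is the composite of a
character of `E` with the norm. -/
theorem gaussSum_traceChar_eq_neg_of_pow_eq_one (hp2 : p ≠ 2) {n : ℕ}
    (hcard : Fintype.card F = p ^ (4 * n)) {χ : MulChar F ℂ} (hχ : χ ≠ 1) (hχp : χ ^ (p + 1) = 1) :
    gaussSum χ (traceChar p F) = -(p : ℂ) ^ (2 * n) := by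
  obtain ⟨E, _, _, _, _, cardE⟩ : ∃ (E : Type) (_ : Field E) (_ : Fintype E)
      (_ : Algebra (ZMod p) E) (_ : Algebra E F), Fintype.card E = p ^ (2 * n) :=
    exists_algebra_of_card_eq_pow p hcard ⟨2, by ring⟩
  have cardF : Fintype.card F = Fintype.card E ^ 2 := by
    rw [hcard, cardE, ← pow_mul]
    ring_nf
  have : CharP E p := charP_of_injective_algebraMap (algebraMap (ZMod p) E).injective p
  have h2 : ringChar E ≠ 2 := by rwa [ringChar.eq E p]
  have hdvd : p + 1 ∣ Fintype.card E - 1 := by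
    rw [cardE, pow_mul]
    refine .trans ⟨p - 1, ?_⟩ (by simpa using Nat.sub_dvd_pow_sub_pow (p ^ 2) 1 n)
    rw [← Nat.sq_sub_sq, one_pow]
  obtain ⟨χE, hχE⟩ := exists_mulChar_norm_eq cardF
    (orderOf_dvd_iff_pow_eq_one.1 ((orderOf_dvd_of_pow_eq_one hχp).trans hdvd))
  have hχE_pow : χE ^ (p + 1) = 1 := (mulChar_pow_eq_one_iff_of_norm_eq hχE _).1 hχp
  have hχE_ne : χE ≠ 1 := by
    simpa using (mulChar_pow_eq_one_iff_of_norm_eq hχE 1).not.1 (by rwa [pow_one])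
  rw [gaussSum_norm_trace_eq_neg_sq h2 cardF hχE_ne (traceChar p E) hχE fun x ↦
    (traceChar_algebraTrace p x).symm,
    gaussSum_traceChar_sq_of_pow_eq_one p hp2 cardE hχE_ne hχE_pow]

end TraceCharacter

section Lifting

variable {A : Type*} [CommRing A] {R S : Type*} [CommRing R] [CommRing S] {f : R →+* S}

theorem exists_mulChar_ringHomComp_eq (hf : Function.Injective f) {χ : MulChar A S}
    (hχ : ∀ x, χ x ∈ f.range) : ∃ χ' : MulChar A R, χ'.ringHomComp f = χ := by
  choose χ' hχ' using hχ
  refine ⟨⟨⟨⟨χ', hf ?_⟩, fun x y ↦ hf ?_⟩, fun x hx ↦ hf ?_⟩, MulChar.ext' hχ'⟩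
  · rw [hχ', map_one, map_one]
  · rw [map_mul, hχ', hχ', hχ', map_mul]
  · exact (hχ' x).trans ((χ.map_nonunit hx).trans f.map_zero.symm)

theorem exists_addChar_compAddChar_eq (hf : Function.Injective f) {ψ : AddChar A S}
    (hψ : ∀ x, ψ x ∈ f.range) : ∃ ψ' : AddChar A R, (f : R →* S).compAddChar ψ' = ψ := by
  choose ψ' hψ' using hψ
  refine ⟨⟨ψ', hf ?_, fun x y ↦ hf ?_⟩, DFunLike.ext _ _ hψ'⟩
  · rw [hψ', map_one, AddChar.map_zero_eq_one]
  · rw [map_mul, hψ', hψ', hψ', AddChar.map_add_eq_mul]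

end Lifting

section GaloisAction

theorem exists_coprime_forall_map_eq_pow {R : Type*} [CommRing R] [IsDomain R] {n : ℕ} [NeZero n]
    {ζ : R} (hζ : IsPrimitiveRoot ζ n) {σ : R →+* R} (hσ : Function.Injective σ) :
    ∃ k : ℕ, k.Coprime n ∧ ∀ z, z ^ n = 1 → σ z = z ^ k := by
  obtain ⟨k, -, hk, hζk⟩ := hζ.isPrimitiveRoot_iff.1 (hζ.map_of_injective hσ)
  refine ⟨k, hk, fun z hz ↦ ?_⟩
  obtain ⟨i, -, rfl⟩ := hζ.eq_pow_of_pow_eq_one hz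
  rw [map_pow, ← hζk, pow_right_comm]

theorem map_gaussSum_eq_gaussSum_pow {A R : Type*} [CommRing A] [Fintype A] [CommRing R]
    {χ : MulChar A R} {ψ : AddChar A R} {σ : R →+* R} {k : ℕ} (hσχ : ∀ x, σ (χ x) = χ x ^ k)
    (hσψ : ∀ x, σ (ψ x) = ψ x ^ k) (hk : IsUnit (k : A)) :
    (χ ^ k) k * σ (gaussSum χ ψ) = gaussSum (χ ^ k) ψ := by
  have hχ : χ.ringHomComp σ = χ ^ k := MulChar.ext fun u ↦ by
    rw [MulChar.ringHomComp_apply, hσχ, MulChar.pow_apply_coe]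
  have hψ : (σ : R →* R).compAddChar ψ = ψ.mulShift k := DFunLike.ext _ _ fun x ↦
    (hσψ x).trans (ψ.mulShift_spec' k x).symm
  rw [← gaussSum_ringHomComp_compAddChar, hχ, hψ, ← gaussSum_mulShift (χ ^ k) ψ hk.unit,
    hk.unit_spec]

theorem map_eq_χ₄_mul_of_sq_eq_neg_one {R : Type*} [CommRing R] {i : R} (hi : i ^ 2 = -1)
    {σ : R →+* R} {k : ℕ} (hk : Odd k) (hσi : σ i = i ^ k) :
    σ i = ((ZMod.χ₄ k : ℤ) : R) * i := by
  obtain ⟨m, rfl⟩ := hk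
  rw [hσi, pow_succ, pow_mul, hi, ZMod.χ₄_eq_neg_one_pow (by lia)]
  simp [show (2 * m + 1) / 2 = m by lia]

variable {K : Type*} [Field K] {l : ℕ} [Fact l.Prime] {ω : K}

theorem gaussSum_quadraticChar_sq [CharZero K] (hl4 : l % 4 = 1) (hω : IsPrimitiveRoot ω l) :
    gaussSum ((quadraticChar (ZMod l)).ringHomComp (Int.castRingHom K))
      (AddChar.zmodChar l hω.pow_eq_one) ^ 2 = l := by
  have hl2 : ringChar (ZMod l) ≠ 2 := by
    rw [ZMod.ringChar_zmod_n]
    rintro rfl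
    simp at hl4
  have hne : (quadraticChar (ZMod l)).ringHomComp (Int.castRingHom K) ≠ 1 := fun h ↦
    quadraticChar_ne_one hl2 ((MulChar.ringHomComp_eq_one_iff Int.cast_injective).1 h)
  rw [gaussSum_sq hne ((quadraticChar_isQuadratic _).comp _)
    (AddChar.zmodChar_primitive_of_primitive_root l hω), MulChar.ringHomComp_apply,
    quadraticChar_neg_one hl2, ZMod.card, ZMod.χ₄_nat_one_mod_four hl4, map_one, one_mul]

theorem map_gaussSum_quadraticChar (hω : IsPrimitiveRoot ω l) {σ : K →+* K} {k : ℕ} (hk : Odd k)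
    (hkl : (k : ZMod l) ≠ 0) (hσω : σ ω = ω ^ k) :
    let η := (quadraticChar (ZMod l)).ringHomComp (Int.castRingHom K)
    let e := AddChar.zmodChar l hω.pow_eq_one
    σ (gaussSum η e) = ((quadraticChar (ZMod l) k : ℤ) : K) * gaussSum η e := by
  intro η e
  have hη_pow : η ^ k = η := ((quadraticChar_isQuadratic _).comp _).pow_odd hk
  have hση (x : ZMod l) : σ (η x) = η x ^ k := by
    rw [← MulChar.pow_apply' _ hk.pos.ne', hη_pow, MulChar.ringHomComp_apply, eq_intCast,
      map_intCast]
  have hσe (x : ZMod l) : σ (e x) = e x ^ k := by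
    rw [AddChar.zmodChar_apply, map_pow, hσω, pow_right_comm]
  have hmap := map_gaussSum_eq_gaussSum_pow hση hσe (Ne.isUnit hkl)
  have hsq : ((quadraticChar (ZMod l) k : ℤ) : K) * ((quadraticChar (ZMod l) k : ℤ) : K) = 1 := by
    rw [← Int.cast_mul, ← sq, quadraticChar_sq_one hkl, Int.cast_one]
  rw [hη_pow, MulChar.ringHomComp_apply, eq_intCast] at hmap
  conv_rhs => rw [← hmap, ← mul_assoc, hsq, one_mul]

/- A square root of `-l` is, up to sign, a fourth root of unity times the quadratic Gauss sum
modulo `l`. -/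
theorem map_eq_of_sq_eq_neg_prime [CharZero K] (hl4 : l % 4 = 1) {i s : K} (hi : i ^ 2 = -1)
    (hω : IsPrimitiveRoot ω l) (hs : s ^ 2 = -l) {σ : K →+* K} {k : ℕ} (hk : Odd k)
    (hkl : (k : ZMod l) ≠ 0) (hσi : σ i = i ^ k) (hσω : σ ω = ω ^ k) :
    σ s = ((ZMod.χ₄ k * quadraticChar (ZMod l) k : ℤ) : K) * s := by
  have hσg := map_gaussSum_quadraticChar hω hk hkl hσω
  have hg := gaussSum_quadraticChar_sq hl4 hω
  set g := gaussSum ((quadraticChar (ZMod l)).ringHomComp (Int.castRingHom K))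
    (AddChar.zmodChar l hω.pow_eq_one)
  have hσig : σ (i * g) = ((ZMod.χ₄ k * quadraticChar (ZMod l) k : ℤ) : K) * (i * g) := by
    rw [map_mul, map_eq_χ₄_mul_of_sq_eq_neg_one hi hk hσi, hσg, Int.cast_mul]
    ring
  rcases sq_eq_sq_iff_eq_or_eq_neg.1 (show s ^ 2 = (i * g) ^ 2 by rw [hs, mul_pow, hi, hg]; ring)
    with rfl | rfl
  · exact hσig
  · rw [map_neg, hσig, mul_neg]

end GaloisAction

section Arithmetic

theorem exists_pow_eq_of_orderOf_eq_totient {m : ℕ} [NeZero m] {a : ZMod m}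
    (ha : orderOf a = m.totient) {k : ℕ} (hk : k.Coprime m) : ∃ j : ℕ, a ^ j = k := by
  obtain ⟨u, rfl⟩ : IsUnit a :=
    (orderOf_pos_iff.1 (ha ▸ Nat.totient_pos.2 (NeZero.pos m))).isUnit
  rw [orderOf_units] at ha
  have htop : Subgroup.zpowers u = ⊤ := Subgroup.eq_top_of_card_eq _ (by
    rw [Nat.card_zpowers, ha, Nat.card_eq_fintype_card, ZMod.card_units_eq_totient])
  obtain ⟨j, hj⟩ :=
    mem_powers_iff_mem_zpowers.2 (htop ▸ Subgroup.mem_top (ZMod.unitOfCoprime k hk))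
  exact ⟨j, by simpa using congrArg Units.val hj⟩

variable {l : ℕ} [Fact l.Prime]

theorem eq_one_or_eq_neg_one_of_sq_eq_one (hl2 : l ≠ 2) {r : ℕ} {x : ZMod (l ^ r)}
    (hx : x ^ 2 = 1) : x = 1 ∨ x = -1 := by
  obtain ⟨z, rfl⟩ := ZMod.intCast_surjective x
  have hl : Prime (l : ℤ) := Nat.prime_iff_prime_int.1 Fact.out
  have hdvd : (l : ℤ) ^ r ∣ (z - 1) * (z + 1) := by
    rw [← Nat.cast_pow, ← ZMod.intCast_zmod_eq_zero_iff_dvd]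
    push_cast
    linear_combination hx
  have hnot_both : ¬((l : ℤ) ∣ z - 1 ∧ (l : ℤ) ∣ z + 1) := fun ⟨h₁, h₂⟩ ↦ by
    have : (l : ℤ) ∣ (2 : ℕ) := by simpa using dvd_sub h₂ h₁
    exact hl2
      ((Nat.prime_dvd_prime_iff_eq Fact.out Nat.prime_two).1 (Int.natCast_dvd_natCast.1 this))
  rcases not_and_or.1 hnot_both with h | h
  · right
    have := hl.pow_dvd_of_dvd_mul_left r h hdvd
    rw [← Nat.cast_pow, ← ZMod.intCast_zmod_eq_zero_iff_dvd] at this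
    push_cast at this
    exact eq_neg_of_add_eq_zero_left this
  · left
    have := hl.pow_dvd_of_dvd_mul_right r h hdvd
    rw [← Nat.cast_pow, ← ZMod.intCast_zmod_eq_zero_iff_dvd] at this
    push_cast at this
    exact sub_eq_zero.1 this

theorem quadraticChar_eq_neg_one_of_orderOf_eq_totient (hl2 : l ≠ 2) {r : ℕ} (hr : r ≠ 0) {p : ℕ}
    (hord : orderOf (p : ZMod (l ^ r)) = (l ^ r).totient) :
    quadraticChar (ZMod l) p = -1 := by
  obtain ⟨a, ha⟩ := quadraticChar_exists_neg_one (F := ZMod l) (by rwa [ZMod.ringChar_zmod_n])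
  have ha0 : a ≠ 0 := fun h ↦ by simp [h] at ha
  have hcop : a.val.Coprime (l ^ r) :=
    .pow_right r ((ZMod.isUnit_iff_coprime _ _).1 (by simpa using Ne.isUnit ha0))
  obtain ⟨j, hj⟩ := exists_pow_eq_of_orderOf_eq_totient hord hcop
  have hpa : (p : ZMod l) ^ j = a := by
    simpa only [map_pow, map_natCast, ZMod.natCast_zmod_val] using
      congrArg (ZMod.castHom (dvd_pow_self l hr) (ZMod l)) hj
  rw [← hpa, map_pow] at ha
  rcases quadraticChar_isQuadratic (ZMod l) (p : ZMod l) with h | h | h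
  · cases j <;> simp [h] at ha
  · simp [h] at ha
  · exact h

theorem four_mul_dvd_two_mul_pow_add_one {p r n : ℕ} (hl2 : l ≠ 2) (hp : Odd p)
    (hpow : (p : ZMod (l ^ r)) ^ n = -1) : 4 * l ^ r ∣ 2 * (p ^ n + 1) := by
  have hl_dvd : l ^ r ∣ p ^ n + 1 := by
    rw [← ZMod.natCast_eq_zero_iff, Nat.cast_add, Nat.cast_pow, hpow, Nat.cast_one, neg_add_cancel]
  have hcop : Nat.Coprime 2 (l ^ r) :=
    .pow_right r ((Nat.coprime_primes Nat.prime_two Fact.out).2 hl2.symm)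
  rw [show 4 * l ^ r = 2 * (2 * l ^ r) by ring]
  exact mul_dvd_mul_left 2 (hcop.mul_dvd_of_dvd_of_dvd hp.pow.add_one.two_dvd hl_dvd)

theorem four_mul_mul_sub_one_dvd {p r n : ℕ} (hl2 : l ≠ 2) (hp4 : p % 4 = 3)
    (hpl : (p : ZMod l) ≠ 1) (hpow : (p : ZMod (l ^ r)) ^ (2 * n) = 1) :
    4 * l ^ r * (p - 1) ∣ p ^ (2 * n) - 1 := by
  have hl : l.Prime := Fact.out
  have hfour : 4 * (p - 1) ∣ p ^ (2 * n) - 1 := by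
    refine .trans ?_ (by simpa [pow_mul] using Nat.sub_dvd_pow_sub_pow (p ^ 2) 1 n)
    rw [← one_pow 2, Nat.sq_sub_sq]
    exact mul_dvd_mul_right (by lia) _
  have hpow_dvd : l ^ r ∣ p ^ (2 * n) - 1 := by
    rw [← ZMod.natCast_eq_zero_iff, Nat.cast_pred (Nat.pow_pos (by lia)),
      Nat.cast_pow, hpow, sub_self]
  have hcoprime : (l ^ r).Coprime (4 * (p - 1)) := by
    refine .pow_left r (hl.coprime_iff_not_dvd.2 fun h ↦ ?_)
    rcases hl.dvd_mul.1 h with h | h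
    · exact hl2 ((Nat.prime_dvd_prime_iff_eq hl Nat.prime_two).1
        (hl.dvd_of_dvd_pow (show l ∣ 2 ^ 2 from h)))
    · rw [← ZMod.natCast_eq_zero_iff, Nat.cast_pred (by lia), sub_eq_zero] at h
      exact hpl h
  convert hcoprime.mul_dvd_of_dvd_of_dvd hpow_dvd hfour using 1
  ring

theorem natCast_eq_neg_one_of_mod_four {p : ℕ} (hp4 : p % 4 = 3) : (p : ZMod 4) = -1 := by
  rw [← ZMod.natCast_mod, hp4]
  rfl

theorem natCast_eq_pow_or_eq_neg_pow {k p : ℕ} (hk : Odd k) (hp4 : p % 4 = 3) (j : ℕ) :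
    (k : ZMod 4) = p ^ j ∨ (k : ZMod 4) = -p ^ j := by
  have hk4 : (k : ZMod 4) = 1 ∨ (k : ZMod 4) = -1 := by
    rcases Nat.odd_mod_four_iff.1 (Nat.odd_iff.1 hk) with h | h <;>
      simp only [← ZMod.natCast_mod k 4, h] <;> decide
  rw [natCast_eq_neg_one_of_mod_four hp4]
  rcases neg_one_pow_eq_or (ZMod 4) j with h | h <;> rw [h]
  · exact hk4
  · rwa [neg_neg, or_comm]

theorem coprime_four_pow (hl2 : l ≠ 2) (r : ℕ) : Nat.Coprime 4 (l ^ r) :=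
  .pow 2 r ((Nat.coprime_primes Nat.prime_two Fact.out).2 hl2.symm)

theorem totient_four_mul_pow (hl2 : l ≠ 2) (r : ℕ) :
    (4 * l ^ r).totient = 2 * (l ^ r).totient := by
  rw [Nat.totient_mul (coprime_four_pow hl2 r)]
  rfl

theorem ext_zmod_four_mul (hl2 : l ≠ 2) {r : ℕ} {x y : ZMod (4 * l ^ r)}
    (h4 : (x.cast : ZMod 4) = y.cast) (hl : (x.cast : ZMod (l ^ r)) = y.cast) : x = y :=
  (ZMod.chineseRemainder (coprime_four_pow hl2 r)).injective (Prod.ext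
    (by simpa [ZMod.chineseRemainder] using h4) (by simpa [ZMod.chineseRemainder] using hl))

theorem four_dvd_totient_pow (hl4 : l % 4 = 1) {r : ℕ} (hr : r ≠ 0) : 4 ∣ (l ^ r).totient := by
  rw [Nat.totient_prime_pow Fact.out (Nat.pos_of_ne_zero hr)]
  exact (show 4 ∣ l - 1 by lia).mul_left _

theorem pow_half_totient_eq_neg_one (hl2 : l ≠ 2) {r n : ℕ} {x : ZMod (l ^ r)}
    (hord : orderOf x = (l ^ r).totient) (hn : (l ^ r).totient = 2 * n) : x ^ n = -1 := by
  have hn0 : n ≠ 0 := fun h ↦ by simp [h, (Fact.out : l.Prime).ne_zero] at hn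
  refine (eq_one_or_eq_neg_one_of_sq_eq_one hl2 ?_).resolve_left
    (pow_ne_one_of_lt_orderOf hn0 (by lia))
  rw [← pow_mul, mul_comm, ← hn, ← hord, pow_orderOf_eq_one]

/- `p` generates the units modulo `l ^ r` and has an even power congruent to `-1` there, while
`p = -1` modulo `4`. -/
theorem exists_eq_pow_or_eq_neg_pow (hl4 : l % 4 = 1) {p r : ℕ} (hr : r ≠ 0) (hp4 : p % 4 = 3)
    (hord : orderOf (p : ZMod (l ^ r)) = (l ^ r).totient) {k : ℕ} (hk : k.Coprime (4 * l ^ r)) :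
    ∃ j : ℕ, (k : ZMod (4 * l ^ r)) = p ^ j ∨ (k : ZMod (4 * l ^ r)) = -p ^ j := by
  have hl2 : l ≠ 2 := by lia
  obtain ⟨j, hj⟩ := exists_pow_eq_of_orderOf_eq_totient hord
    (hk.coprime_dvd_right ⟨4, mul_comm _ _⟩)
  obtain ⟨n, hn⟩ := four_dvd_totient_pow hl4 hr
  have hneg : (p : ZMod (l ^ r)) ^ (2 * n) = -1 :=
    pow_half_totient_eq_neg_one hl2 hord (by lia)
  have hk_odd : Odd k := Nat.coprime_two_right.1 (hk.coprime_dvd_right ⟨2 * l ^ r, by ring⟩)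
  have hp_even : (p : ZMod 4) ^ (2 * n) = 1 := by
    rw [natCast_eq_neg_one_of_mod_four hp4, pow_mul, neg_one_sq, one_pow]
  rcases natCast_eq_pow_or_eq_neg_pow hk_odd hp4 j with h | h
  · exact ⟨j, .inl (ext_zmod_four_mul hl2 (by simpa using h) (by simpa using hj.symm))⟩
  · refine ⟨j + 2 * n, .inr (ext_zmod_four_mul hl2 ?_ ?_)⟩
    · simpa [pow_add, hp_even] using h
    · simpa [pow_add, hneg] using hj.symm

theorem χ₄_mul_quadraticChar_pow {p : ℕ} (hp4 : p % 4 = 3)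
    (hq : quadraticChar (ZMod l) p = -1) (j : ℕ) :
    ZMod.χ₄ (p ^ j) * quadraticChar (ZMod l) (p ^ j) = 1 := by
  rw [map_pow, map_pow, hq, ZMod.χ₄_nat_three_mod_four hp4, ← mul_pow, neg_one_mul, neg_neg,
    one_pow]

theorem χ₄_mul_quadraticChar_neg (hl4 : l % 4 = 1) (x : ZMod 4) (y : ZMod l) :
    ZMod.χ₄ (-x) * quadraticChar (ZMod l) (-y) = -(ZMod.χ₄ x * quadraticChar (ZMod l) y) := by
  have hχ₄ : ZMod.χ₄ (-1) = -1 := by decide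
  have hquad : quadraticChar (ZMod l) (-1) = 1 := by
    rw [quadraticChar_neg_one (by rw [ZMod.ringChar_zmod_n]; lia), ZMod.card,
      ZMod.χ₄_nat_one_mod_four hl4]
  rw [neg_eq_neg_one_mul x, neg_eq_neg_one_mul y, map_mul, map_mul, hχ₄, hquad]
  ring

theorem χ₄_mul_quadraticChar_of_eq_pow {p r k j : ℕ} (hr : r ≠ 0) (hp4 : p % 4 = 3)
    (hq : quadraticChar (ZMod l) p = -1) (hk : (k : ZMod (4 * l ^ r)) = p ^ j) :
    ZMod.χ₄ k * quadraticChar (ZMod l) k = 1 := by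
  have hk4 : (k : ZMod 4) = p ^ j := by
    simpa only [map_natCast, map_pow] using
      congrArg (ZMod.castHom (dvd_mul_right 4 (l ^ r)) (ZMod 4)) hk
  have hkl : (k : ZMod l) = p ^ j := by
    simpa only [map_natCast, map_pow] using
      congrArg (ZMod.castHom ((dvd_pow_self l hr).mul_left 4) (ZMod l)) hk
  rw [hk4, hkl, χ₄_mul_quadraticChar_pow hp4 hq]

theorem χ₄_mul_quadraticChar_of_eq_neg_pow {p r k j : ℕ} (hr : r ≠ 0) (hl4 : l % 4 = 1)
    (hp4 : p % 4 = 3) (hq : quadraticChar (ZMod l) p = -1)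
    (hk : (k : ZMod (4 * l ^ r)) = -p ^ j) :
    ZMod.χ₄ k * quadraticChar (ZMod l) k = -1 := by
  have hk4 : (k : ZMod 4) = -p ^ j := by
    simpa only [map_natCast, map_neg, map_pow] using
      congrArg (ZMod.castHom (dvd_mul_right 4 (l ^ r)) (ZMod 4)) hk
  have hkl : (k : ZMod l) = -p ^ j := by
    simpa only [map_natCast, map_neg, map_pow] using
      congrArg (ZMod.castHom ((dvd_pow_self l hr).mul_left 4) (ZMod l)) hk
  rw [hk4, hkl, χ₄_mul_quadraticChar_neg hl4, χ₄_mul_quadraticChar_pow hp4 hq]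

end Arithmetic

section PowCharacter

variable {A : Type*} [CommRing A] [IsDomain A] [Fintype A] {R : Type*} [CommRing R] {p N k j : ℕ}
  [Fact p.Prime] [CharP A p] {χ : MulChar A R} {ψ : AddChar A R}

theorem gaussSum_pow_of_natCast_eq_pow (hψ : ∀ x, ψ (x ^ p) = ψ x) (hχ : χ ^ N = 1)
    (hk : (k : ZMod N) = p ^ j) : gaussSum (χ ^ k) ψ = gaussSum χ ψ := by
  have hmod : k ≡ p ^ j [MOD N] := (ZMod.natCast_eq_natCast_iff _ _ _).1 (by simpa using hk)
  rw [pow_eq_pow_of_modEq hmod hχ, gaussSum_pow_charP_pow p hψ]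

theorem gaussSum_pow_of_natCast_eq_neg_pow (hψ : ∀ x, ψ (x ^ p) = ψ x) (hχ : χ ^ N = 1)
    (hk : (k : ZMod N) = -p ^ j) : gaussSum (χ ^ k) ψ = gaussSum χ⁻¹ ψ := by
  have hdvd : N ∣ k + p ^ j := by
    rw [← ZMod.natCast_eq_zero_iff, Nat.cast_add, hk, Nat.cast_pow, neg_add_cancel]
  have hinv : χ ^ k = χ⁻¹ ^ p ^ j := by
    rw [inv_pow, eq_inv_iff_mul_eq_one, ← pow_add]
    exact orderOf_dvd_iff_pow_eq_one.1 ((orderOf_dvd_of_pow_eq_one hχ).trans hdvd)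
  rw [hinv, gaussSum_pow_charP_pow p hψ]

end PowCharacter

section Dichotomy

variable {K : Type*} [Field K] {F : Type*} [Field F] {p l r k : ℕ}

theorem map_mulChar_apply_eq_pow {N : ℕ} {σ : K →+* K} (hk : k ≠ 0)
    (hσ : ∀ z, z ^ N = 1 → σ z = z ^ k) {χ : MulChar F K} (hχ : χ ^ N = 1) (x : F) :
    σ (χ x) = χ x ^ k := by
  rcases eq_or_ne x 0 with rfl | hx
  · rw [χ.map_zero, map_zero, zero_pow hk]
  · obtain ⟨u, rfl⟩ := hx.isUnit
    exact hσ _ (by rw [← MulChar.pow_apply_coe, hχ, MulChar.one_apply_coe])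

theorem addChar_apply_pow_char [CharP F p] (ψ : AddChar F K) (x : F) : ψ x ^ p = 1 := by
  rw [← AddChar.map_nsmul_eq_pow, nsmul_eq_mul, CharP.cast_eq_zero, zero_mul,
    AddChar.map_zero_eq_one]

variable [Fintype F]

theorem map_gaussSum_eq_gaussSum_pow_of_apply_eq_one {χ : MulChar F K} {ψ : AddChar F K}
    {σ : K →+* K} (hσχ : ∀ x, σ (χ x) = χ x ^ k) (hσψ : ∀ x, σ (ψ x) = ψ x ^ k) (hk : (k : F) ≠ 0)
    (hχk : χ k = 1) : σ (gaussSum χ ψ) = gaussSum (χ ^ k) ψ := by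
  have hχk_pow : (χ ^ k) k = 1 := by
    obtain ⟨u, hu⟩ := hk.isUnit
    rw [← hu, MulChar.pow_apply_coe, hu, hχk, one_pow]
  rw [← map_gaussSum_eq_gaussSum_pow hσχ hσψ hk.isUnit, hχk_pow, one_mul]

variable [CharZero K] [IsAlgClosed K] [Fact p.Prime] [Fact l.Prime] [CharP F p]

theorem map_eq_of_sq_eq_neg_prime_of_coprime (hl4 : l % 4 = 1) (hr : r ≠ 0) {s : K}
    (hs : s ^ 2 = -l) {σ : K →+* K} (hk : k.Coprime (4 * l ^ r))
    (hσ : ∀ z, z ^ (4 * l ^ r) = 1 → σ z = z ^ k) :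
    σ s = ((ZMod.χ₄ k * quadraticChar (ZMod l) k : ℤ) : K) * s := by
  obtain ⟨i, hi⟩ := IsAlgClosed.exists_pow_nat_eq (-1 : K) two_pos
  obtain ⟨ω, hω⟩ := HasEnoughRootsOfUnity.exists_primitiveRoot K l
  have hi_pow : i ^ (4 * l ^ r) = 1 := by
    rw [show 4 * l ^ r = 2 * (2 * l ^ r) by ring, pow_mul, hi, pow_mul, neg_one_sq, one_pow]
  have hω_pow : ω ^ (4 * l ^ r) = 1 :=
    (hω.pow_eq_one_iff_dvd _).2 ((dvd_pow_self l hr).mul_left 4)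
  have hk_coprime : k.Coprime l := hk.coprime_dvd_right ((dvd_pow_self l hr).mul_left 4)
  have hkl : (k : ZMod l) ≠ 0 := ((ZMod.isUnit_iff_coprime k l).2 hk_coprime).ne_zero
  exact map_eq_of_sq_eq_neg_prime hl4 hi hω hs
    (Nat.coprime_two_right.1 (hk.coprime_dvd_right ⟨2 * l ^ r, by ring⟩)) hkl (hσ i hi_pow)
    (hσ ω hω_pow)

theorem exists_coprime_map_gaussSum_eq_gaussSum_pow {N : ℕ} (hN : N ≠ 0) (σ : K →+* K) :
    ∃ k : ℕ, k.Coprime N ∧ (∀ z, z ^ N = 1 → σ z = z ^ k) ∧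
      ∀ χ : MulChar F K, χ ^ N = 1 → (∀ m : ℕ, (m : F) ≠ 0 → χ m = 1) →
        ∀ ψ : AddChar F K, σ (gaussSum χ ψ) = gaussSum (χ ^ k) ψ := by
  obtain ⟨p, _⟩ := CharP.exists F
  have hp : p.Prime := CharP.char_is_prime F p
  have : NeZero (p * N) := ⟨mul_ne_zero hp.ne_zero hN⟩
  obtain ⟨ζ, hζ⟩ := HasEnoughRootsOfUnity.exists_primitiveRoot K (p * N)
  obtain ⟨k, hk, hσ⟩ := exists_coprime_forall_map_eq_pow hζ σ.injective
  have hkF : (k : F) ≠ 0 := by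
    rw [Ne, CharP.cast_eq_zero_iff F p, ← hp.coprime_iff_not_dvd]
    exact hk.coprime_mul_right_right.symm
  have hk0 : k ≠ 0 := fun h ↦ hkF (by rw [h, Nat.cast_zero])
  have hσN (z : K) (hz : z ^ N = 1) : σ z = z ^ k :=
    hσ z (by rw [mul_comm, pow_mul, hz, one_pow])
  have hσψ (ψ : AddChar F K) (x : F) : σ (ψ x) = ψ x ^ k :=
    hσ _ (by rw [pow_mul, addChar_apply_pow_char, one_pow])
  exact ⟨k, hk.coprime_mul_left_right, hσN, fun χ hχ hχp ψ ↦
    map_gaussSum_eq_gaussSum_pow_of_apply_eq_one (map_mulChar_apply_eq_pow hk0 hσN hχ) (hσψ ψ) hkF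
      (hχp k hkF)⟩

theorem map_gaussSum_fixed_or_swapped (hl4 : l % 4 = 1) (hr : r ≠ 0) (hp4 : p % 4 = 3)
    (hord : orderOf (p : ZMod (l ^ r)) = (l ^ r).totient) {χ : MulChar F K}
    (hχ : χ ^ (4 * l ^ r) = 1) (hχp : ∀ m : ℕ, (m : F) ≠ 0 → χ m = 1) {ψ : AddChar F K}
    (hψ : ∀ x, ψ (x ^ p) = ψ x) {s : K} (hs : s ^ 2 = -l) (σ : K →+* K) :
    σ (gaussSum χ ψ) = gaussSum χ ψ ∧ σ (gaussSum χ⁻¹ ψ) = gaussSum χ⁻¹ ψ ∧ σ s = s ∨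
      σ (gaussSum χ ψ) = gaussSum χ⁻¹ ψ ∧ σ (gaussSum χ⁻¹ ψ) = gaussSum χ ψ ∧ σ s = -s := by
  have hN : 4 * l ^ r ≠ 0 := mul_ne_zero four_ne_zero (pow_ne_zero r (Fact.out : l.Prime).ne_zero)
  obtain ⟨k, hk, hσ, hσ_gaussSum⟩ :=
    exists_coprime_map_gaussSum_eq_gaussSum_pow (F := F) hN σ
  have hχ_inv : χ⁻¹ ^ (4 * l ^ r) = 1 := by rw [inv_pow, hχ, inv_one]
  have hσs := map_eq_of_sq_eq_neg_prime_of_coprime hl4 hr hs hk hσ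
  have hq := quadraticChar_eq_neg_one_of_orderOf_eq_totient (by lia) hr hord
  rw [hσ_gaussSum χ hχ hχp, hσ_gaussSum χ⁻¹ hχ_inv fun m hm ↦ by
    rw [MulChar.inv_apply_eq_inv, hχp m hm, Ring.inverse_one], hσs]
  obtain ⟨j, hj | hj⟩ := exists_eq_pow_or_eq_neg_pow hl4 hr hp4 hord hk
  · rw [gaussSum_pow_of_natCast_eq_pow hψ hχ hj, gaussSum_pow_of_natCast_eq_pow hψ hχ_inv hj,
      χ₄_mul_quadraticChar_of_eq_pow hr hp4 hq hj, Int.cast_one, one_mul]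
    exact .inl ⟨rfl, rfl, rfl⟩
  · rw [gaussSum_pow_of_natCast_eq_neg_pow hψ hχ hj,
      gaussSum_pow_of_natCast_eq_neg_pow hψ hχ_inv hj, inv_inv,
      χ₄_mul_quadraticChar_of_eq_neg_pow hr hl4 hp4 hq hj, Int.cast_neg, Int.cast_one, neg_one_mul]
    exact .inr ⟨rfl, rfl, rfl⟩

end Dichotomy

section Rationality

theorem exists_ratCast_eq_of_forall_map_eq {K : Type*} [Field K] [IsAlgClosed K]
    [Algebra ℚ K] [Algebra.IsAlgebraic ℚ K] {x : K} (hx : ∀ σ : K →+* K, σ x = x) :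
    ∃ q : ℚ, (q : K) = x := by
  have : IsAlgClosure ℚ K := ⟨inferInstance, inferInstance⟩
  have : IsGalois ℚ K := IsAlgClosure.isGalois ℚ K
  obtain ⟨q, hq⟩ := (InfiniteGalois.mem_range_algebraMap_iff_fixed (k := ℚ) x).2 fun σ ↦ hx σ
  exact ⟨q, by simpa using hq⟩

theorem mem_range_of_isIntegral {K L : Type*} [Field K] [IsAlgClosed K] [Field L]
    (f : K →+* L) {x : L} (hx : IsIntegral ℤ x) : x ∈ f.range := by
  algebraize [f]
  exact (hx.tower_top (A := K)).mem_range_algebraMap_of_minpoly_splits (K := K)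
    (IsAlgClosed.splits _)

theorem isIntegral_addChar_apply {F R : Type*} [Field F] [Finite F] [Field R] (ψ : AddChar F R)
    (x : F) : IsIntegral ℤ (ψ x) := by
  obtain ⟨p, _⟩ := CharP.exists F
  refine .of_pow (CharP.char_is_prime F p).pos ?_
  rw [addChar_apply_pow_char]
  exact isIntegral_one

theorem isIntegral_of_sq_eq_neg_natCast {R : Type*} [CommRing R] {s : R} {l : ℕ}
    (hs : s ^ 2 = -l) : IsIntegral ℤ s :=
  .of_pow two_pos (hs ▸ (isIntegral_natCast l).neg)

theorem exists_ratCast_eq_gaussSum_add_and_sub_mul {L : Type*} [Field L] [CharZero L]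
    [IsAlgClosed L] {F : Type*} [Field F] [Fintype F] {p l r : ℕ} [Fact p.Prime] [Fact l.Prime]
    [CharP F p] (hl4 : l % 4 = 1) (hr : r ≠ 0) (hp4 : p % 4 = 3)
    (hord : orderOf (p : ZMod (l ^ r)) = (l ^ r).totient) {χ : MulChar F L}
    (hχ : χ ^ (4 * l ^ r) = 1) (hχp : ∀ m : ℕ, (m : F) ≠ 0 → χ m = 1) {ψ : AddChar F L}
    (hψ : ∀ x, ψ (x ^ p) = ψ x) {s : L} (hs : s ^ 2 = -l) :
    ∃ u v : ℚ, (u : L) = gaussSum χ ψ + gaussSum χ⁻¹ ψ ∧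
      (v : L) = (gaussSum χ ψ - gaussSum χ⁻¹ ψ) * s := by
  have : Algebra.IsAlgebraic ℚ (AlgebraicClosure ℚ) := AlgebraicClosure.isAlgebraic ℚ
  let f : AlgebraicClosure ℚ →+* L := (IsAlgClosed.lift : AlgebraicClosure ℚ →ₐ[ℚ] L)
  have hf : Function.Injective f := f.injective
  obtain ⟨χ, rfl⟩ := exists_mulChar_ringHomComp_eq hf fun x ↦
    mem_range_of_isIntegral f (isIntegral_mulChar_apply χ x)
  obtain ⟨ψ, rfl⟩ := exists_addChar_compAddChar_eq hf fun x ↦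
    mem_range_of_isIntegral f (isIntegral_addChar_apply ψ x)
  obtain ⟨s, rfl⟩ := mem_range_of_isIntegral f (isIntegral_of_sq_eq_neg_natCast hs)
  have hσ := map_gaussSum_fixed_or_swapped hl4 hr hp4 hord (χ := χ) (ψ := ψ) (s := s)
    ((MulChar.ringHomComp_eq_one_iff hf).1 (by rwa [← MulChar.ringHomComp_pow]))
    (fun m hm ↦ hf (by rw [← MulChar.ringHomComp_apply, hχp m hm, map_one]))
    (fun x ↦ hf (hψ x)) (hf (by rw [map_pow, hs, map_neg, map_natCast]))
  obtain ⟨u, hu⟩ : ∃ u : ℚ, u = gaussSum χ ψ + gaussSum χ⁻¹ ψ := by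
    refine exists_ratCast_eq_of_forall_map_eq fun σ ↦ ?_
    rcases hσ σ with ⟨h, h', -⟩ | ⟨h, h', -⟩ <;> rw [map_add, h, h']
    rw [add_comm]
  obtain ⟨v, hv⟩ : ∃ v : ℚ, v = (gaussSum χ ψ - gaussSum χ⁻¹ ψ) * s := by
    refine exists_ratCast_eq_of_forall_map_eq fun σ ↦ ?_
    rcases hσ σ with ⟨h, h', hs⟩ | ⟨h, h', hs⟩ <;> rw [map_mul, map_sub, h, h', hs]
    ring
  refine ⟨u, v, ?_, ?_⟩
  · rw [MulChar.ringHomComp_inv, gaussSum_ringHomComp_compAddChar,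
      gaussSum_ringHomComp_compAddChar, ← map_add, ← hu, map_ratCast]
  · rw [MulChar.ringHomComp_inv, gaussSum_ringHomComp_compAddChar,
      gaussSum_ringHomComp_compAddChar, ← map_sub, ← map_mul, ← hv, map_ratCast]

end Rationality

section IntegralQuotient

theorem isIntegral_jacobiSum {F R : Type*} [Field F] [Fintype F] [CommRing R] (χ φ : MulChar F R) :
    IsIntegral ℤ (jacobiSum χ φ) :=
  IsIntegral.sum _ fun x _ ↦ (isIntegral_mulChar_apply χ x).mul (isIntegral_mulChar_apply φ (1 - x))

theorem isIntegral_gaussSum_div {F K : Type*} [Field F] [Fintype F] [Field K] {χ : MulChar F K}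
    {ψ : AddChar F K} {c : K} (hχ : χ ^ 2 ≠ 1) (hc : gaussSum (χ ^ 2) ψ ^ 2 = c ^ 4) :
    IsIntegral ℤ (gaussSum χ ψ / c) := by
  rcases eq_or_ne c 0 with rfl | hc0
  · rw [div_zero]
    exact isIntegral_zero
  have hjacobi : gaussSum (χ ^ 2) ψ * jacobiSum χ χ = gaussSum χ ψ ^ 2 := by
    rw [sq χ, sq (gaussSum χ ψ)]
    exact jacobiSum_mul_nontrivial (by rwa [← sq]) ψ
  have hpow : (gaussSum χ ψ / c) ^ 4 = jacobiSum χ χ ^ 2 := by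
    rw [div_pow, div_eq_iff (pow_ne_zero 4 hc0), show 4 = 2 * 2 by rfl, pow_mul, ← hjacobi, mul_pow,
      hc, mul_comm]
  exact .of_pow four_pos (hpow ▸ (isIntegral_jacobiSum χ χ).pow 2)

theorem exists_intCast_eq_of_isIntegral_ratCast {K : Type*} [Field K] [CharZero K] {q : ℚ}
    (hq : IsIntegral ℤ (q : K)) : ∃ m : ℤ, (m : ℚ) = q :=
  IsIntegrallyClosed.isIntegral_iff.1
    ((isIntegral_algHom_iff (Rat.castHom K).toIntAlgHom (Rat.castHom K).injective).1 hq)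

end IntegralQuotient

section Descent

theorem exists_eq_two_mul_of_mul_sq_add_sq_eq {l x y Q : ℤ} (hl : Prime l) (hl4 : l % 4 = 1)
    (h : l * x ^ 2 + y ^ 2 = 4 * l * Q) :
    ∃ a b, x = 2 * a ∧ y = -(2 * l * b) ∧ a ^ 2 + l * b ^ 2 = Q := by
  obtain ⟨z, rfl⟩ : l ∣ y := hl.dvd_of_dvd_pow (n := 2) ⟨4 * Q - x ^ 2, by linear_combination h⟩
  have hxz : x ^ 2 + l * z ^ 2 = 4 * Q := mul_left_cancel₀ hl.ne_zero (by linear_combination h)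
  obtain ⟨m, rfl⟩ : ∃ m, l = 4 * m + 1 := ⟨l / 4, by lia⟩
  rcases Int.even_or_odd' x with ⟨a, rfl | rfl⟩ <;> rcases Int.even_or_odd' z with ⟨b, rfl | rfl⟩
  · exact ⟨a, -b, rfl, by ring, by linarith⟩
  all_goals
    ring_nf at hxz
    lia

theorem exists_eq_add_mul_of_add_eq_of_sub_mul_eq {K : Type*} [Field K] [CharZero K] {l x y Q : ℤ}
    {γ γ' s : K} (hl : Prime l) (hl4 : l % 4 = 1) (hs : s ^ 2 = -l) (hadd : γ + γ' = x)
    (hsub : (γ - γ') * s = y) (hmul : γ * γ' = Q) :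
    ∃ a b : ℤ, a ^ 2 + l * b ^ 2 = Q ∧ γ = a + b * s := by
  have hquad : (l : K) * x ^ 2 + y ^ 2 = 4 * l * Q := by
    rw [← hadd, ← hsub, ← hmul, mul_pow, hs]
    ring
  obtain ⟨a, b, rfl, rfl, hab⟩ :=
    exists_eq_two_mul_of_mul_sq_add_sq_eq hl hl4 (Q := Q) (by exact_mod_cast hquad)
  have hdiff : γ - γ' = 2 * b * s := by
    refine mul_left_cancel₀ (Int.cast_ne_zero.2 hl.ne_zero : (l : K) ≠ 0) ?_
    push_cast at hsub
    linear_combination (γ - γ') * hs - s * hsub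
  refine ⟨a, b, hab, ?_⟩
  push_cast at hadd
  linear_combination (hadd + hdiff) / 2

theorem exists_eq_add_mul_of_isIntegral {K : Type*} [Field K] [CharZero K] {l Q : ℤ} {u v : ℚ}
    {γ γ' s : K} (hl : Prime l) (hl4 : l % 4 = 1) (hs : s ^ 2 = -l) (hγ : IsIntegral ℤ γ)
    (hγ' : IsIntegral ℤ γ') (hadd : γ + γ' = u) (hsub : (γ - γ') * s = v) (hmul : γ * γ' = Q) :
    ∃ a b : ℤ, a ^ 2 + l * b ^ 2 = Q ∧ γ = a + b * s := by
  have hs_int : IsIntegral ℤ s := .of_pow two_pos (hs ▸ (isIntegral_intCast l).neg)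
  obtain ⟨x, rfl⟩ := exists_intCast_eq_of_isIntegral_ratCast (hadd ▸ hγ.add hγ')
  obtain ⟨y, rfl⟩ := exists_intCast_eq_of_isIntegral_ratCast (hsub ▸ (hγ.sub hγ').mul hs_int)
  rw [Rat.cast_intCast] at hadd hsub
  exact exists_eq_add_mul_of_add_eq_of_sub_mul_eq hl hl4 hs hadd hsub hmul

end Descent

section Congruence

variable {A : Type*} [CommRing A] [Fintype A] {l : ℕ} [Fact l.Prime]

theorem gaussSum_frob_iter {R : Type*} [CommRing R] [CharP R l] (χ : MulChar A R) (ψ : AddChar A R)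
    (r : ℕ) : gaussSum χ ψ ^ l ^ r = gaussSum (χ ^ l ^ r) (ψ ^ l ^ r) := by
  induction r with
  | zero => simp only [pow_zero, pow_one]
  | succ r ih => rw [pow_succ, pow_mul, ih, gaussSum_frob, ← pow_mul, ← pow_mul]

theorem gaussSum_pow_eq_of_apply_eq_one {R : Type*} [CommRing R] [CharP R l] {χ : MulChar A R}
    (hl : IsUnit (l : A)) (hχl : χ l = 1) (ψ : AddChar A R) (r : ℕ) :
    gaussSum χ ψ ^ l ^ r = gaussSum (χ ^ l ^ r) ψ := by
  have hχl_pow : (χ ^ l ^ r) ↑(l ^ r : ℕ) = 1 := by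
    rw [MulChar.pow_apply' _ (pow_ne_zero r (Fact.out : l.Prime).ne_zero), Nat.cast_pow, map_pow,
      hχl, one_pow, one_pow]
  have hl_pow : IsUnit ((l ^ r : ℕ) : A) := by
    rw [Nat.cast_pow]
    exact hl.pow r
  rw [gaussSum_frob_iter, AddChar.pow_mulShift,
    gaussSum_mulShift_of_apply_eq_one _ _ hl_pow hχl_pow]

theorem exists_maximal_charP_quotient (l : ℕ) [Fact l.Prime] (S : Type*) [CommRing S]
    [Algebra.IsIntegral ℤ S] [FaithfulSMul ℤ S] :
    ∃ M : Ideal S, M.IsMaximal ∧ CharP (S ⧸ M) l := by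
  have hl : Prime (l : ℤ) := Nat.prime_iff_prime_int.1 Fact.out
  have : (Ideal.span {(l : ℤ)}).IsMaximal :=
    PrincipalIdealRing.isMaximal_of_irreducible hl.irreducible
  obtain ⟨M, hM, hMl⟩ :=
    Ideal.exists_maximal_ideal_liesOver_of_isIntegral (S := S) (Ideal.span {(l : ℤ)})
  refine ⟨M, hM, ⟨fun n ↦ ?_⟩⟩
  rw [← Int.natCast_dvd_natCast, ← Ideal.mem_span_singleton, hMl.over, Ideal.mem_comap, map_natCast,
    ← map_natCast (Ideal.Quotient.mk M), Ideal.Quotient.eq_zero_iff_mem]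

theorem intCast_eq_intCast_of_gaussSum_eq {R : Type*} [CommRing R] [IsReduced R] [CharP R l]
    {χ : MulChar A R} {ψ : AddChar A R} (hlA : IsUnit (l : A)) (hχl : χ l = 1) {s : R}
    (hs : s ^ 2 = -l) {r : ℕ} {u v c : ℤ} (hχ : gaussSum χ ψ = u + v * s)
    (hχr : gaussSum (χ ^ l ^ r) ψ = c) : (u : R) = c := by
  have hs0 : s = 0 := by
    rw [← pow_eq_zero_iff two_ne_zero, hs, CharP.cast_eq_zero, neg_zero]
  have hpow := gaussSum_pow_eq_of_apply_eq_one hlA hχl ψ r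
  rwa [hχ, hχr, hs0, mul_zero, add_zero, ← iterateFrobenius_def, map_intCast] at hpow

/- Reduce modulo a prime above `l` of the ring of algebraic integers, where raising to the power
`l ^ r` becomes additive and `s` becomes `0`. -/
theorem int_modEq_of_gaussSum_eq {L : Type*} [Field L] [CharZero L] {F : Type*} [Field F]
    [Fintype F] {χ : MulChar F L} {ψ : AddChar F L} (hlF : (l : F) ≠ 0) (hχl : χ l = 1) {s : L}
    (hs : s ^ 2 = -l) {r : ℕ} {u v c : ℤ} (hχ : gaussSum χ ψ = u + v * s)
    (hχr : gaussSum (χ ^ l ^ r) ψ = c) : u ≡ c [ZMOD l] := by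
  let ι := algebraMap (integralClosure ℤ L) L
  have hι : Function.Injective ι := FaithfulSMul.algebraMap_injective _ _
  have hι_mem {x : L} (hx : IsIntegral ℤ x) : x ∈ ι.range := ⟨⟨x, hx⟩, rfl⟩
  obtain ⟨χ, rfl⟩ := exists_mulChar_ringHomComp_eq hι fun x ↦
    hι_mem (isIntegral_mulChar_apply χ x)
  obtain ⟨ψ, rfl⟩ := exists_addChar_compAddChar_eq hι fun x ↦
    hι_mem (isIntegral_addChar_apply ψ x)
  obtain ⟨s, rfl⟩ := hι_mem (isIntegral_of_sq_eq_neg_natCast hs)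
  rw [gaussSum_ringHomComp_compAddChar] at hχ
  rw [MulChar.ringHomComp_pow, gaussSum_ringHomComp_compAddChar] at hχr
  replace hχ : gaussSum χ ψ = u + v * s := hι (by simpa using hχ)
  replace hχr : gaussSum (χ ^ l ^ r) ψ = c := hι (by simpa using hχr)
  replace hs : s ^ 2 = -l := hι (by simpa using hs)
  replace hχl : χ l = 1 := hι (by simpa using hχl)
  obtain ⟨M, hM, _⟩ := exists_maximal_charP_quotient l (integralClosure ℤ L)
  let φ := Ideal.Quotient.mk M
  have huc : (u : integralClosure ℤ L ⧸ M) = c :=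
    intCast_eq_intCast_of_gaussSum_eq (χ := χ.ringHomComp φ) (ψ := (φ : _ →* _).compAddChar ψ)
      (s := φ s) (v := v) (r := r) hlF.isUnit (by rw [MulChar.ringHomComp_apply, hχl, map_one])
      (by rw [← map_pow, hs, map_neg, map_natCast])
      (by rw [gaussSum_ringHomComp_compAddChar, hχ, map_add, map_mul, map_intCast, map_intCast])
      (by rw [MulChar.ringHomComp_pow, gaussSum_ringHomComp_compAddChar, hχr, map_intCast])
  exact (CharP.intCast_eq_intCast _ l).1 huc

end Congruence

section MainCase

variable {p l r n : ℕ} [Fact p.Prime] [Fact l.Prime] {F : Type*} [Field F] [Fintype F] [CharP F p]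
  {K : Type*} [Field K] {χ : MulChar F K} {ψ : AddChar F K}

theorem mulChar_natCast_eq_one_of_orderOf_eq_totient (hl2 : l ≠ 2) (hr : r ≠ 0) (hp4 : p % 4 = 3)
    (hord : orderOf (p : ZMod (l ^ r)) = (l ^ r).totient) (hn : (l ^ r).totient = 4 * n)
    (hcard : Fintype.card F = p ^ (4 * n)) (hχ : χ ^ (4 * l ^ r) = 1) {m : ℕ} (hm : (m : F) ≠ 0) :
    χ m = 1 := by
  have hpl : (p : ZMod l) ≠ 1 := fun h ↦ by
    have := quadraticChar_eq_neg_one_of_orderOf_eq_totient hl2 hr hord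
    rw [h, map_one] at this
    norm_num at this
  refine mulChar_natCast_eq_one hχ ?_ hm
  rw [hcard, show 4 * n = 2 * (2 * n) by ring]
  refine four_mul_mul_sub_one_dvd hl2 hp4 hpl ?_
  rw [show 2 * (2 * n) = 4 * n by ring, ← hn, ← hord, pow_orderOf_eq_one]

theorem isIntegral_gaussSum_div_pow (hl2 : l ≠ 2) (hr : r ≠ 0) (hp4 : p % 4 = 3)
    (hord : orderOf (p : ZMod (l ^ r)) = (l ^ r).totient) (hn : (l ^ r).totient = 4 * n)
    (hcard : Fintype.card F = p ^ (4 * n)) (hχ : χ ^ (4 * l ^ r) = 1) (hχ2 : χ ^ 2 ≠ 1)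
    (hψ : ψ.IsPrimitive) (hψp : ∀ x, ψ (x ^ p) = ψ x) :
    IsIntegral ℤ (gaussSum χ ψ / (p : K) ^ n) := by
  have hneg : χ (-1) = 1 := mulChar_neg_one_eq_one fun _ ↦
    mulChar_natCast_eq_one_of_orderOf_eq_totient hl2 hr hp4 hord hn hcard hχ
  have hdvd : 4 * l ^ r ∣ 2 * (p ^ (2 * n) + 1) :=
    four_mul_dvd_two_mul_pow_add_one hl2 (Nat.odd_iff.2 (by lia))
      (pow_half_totient_eq_neg_one hl2 hord (by lia))
  have hinv : (χ ^ 2) ^ p ^ (2 * n) = (χ ^ 2)⁻¹ := by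
    rw [eq_inv_iff_mul_eq_one, ← pow_succ, ← pow_mul]
    exact orderOf_dvd_iff_pow_eq_one.1 ((orderOf_dvd_of_pow_eq_one hχ).trans hdvd)
  refine isIntegral_gaussSum_div hχ2 ?_
  rw [gaussSum_sq_of_pow_charP_pow_eq_inv p hχ2 hψ hψp hinv, MulChar.pow_apply' _ two_ne_zero, hneg,
    hcard, one_pow, one_mul, Nat.cast_pow, ← pow_mul, mul_comm]

theorem exists_gaussSum_eq_pow_mul_add [CharZero K] [IsAlgClosed K] (hl4 : l % 4 = 1) (hr : r ≠ 0)
    (hp4 : p % 4 = 3) (hord : orderOf (p : ZMod (l ^ r)) = (l ^ r).totient)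
    (hn : (l ^ r).totient = 4 * n) (hcard : Fintype.card F = p ^ (4 * n))
    (hχ : χ ^ (4 * l ^ r) = 1) (hχ2 : χ ^ 2 ≠ 1) (hψ : ψ.IsPrimitive)
    (hψp : ∀ x, ψ (x ^ p) = ψ x) {s : K} (hs : s ^ 2 = -l) :
    ∃ a b : ℤ, a ^ 2 + l * b ^ 2 = p ^ (2 * n) ∧ gaussSum χ ψ = p ^ n * (a + b * s) := by
  have hl2 : l ≠ 2 := by lia
  have hχp (m : ℕ) (hm : (m : F) ≠ 0) : χ m = 1 :=
    mulChar_natCast_eq_one_of_orderOf_eq_totient hl2 hr hp4 hord hn hcard hχ hm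
  have hχ1 : χ ≠ 1 := fun h ↦ hχ2 (by rw [h, one_pow])
  have hpn : (p : K) ^ n ≠ 0 := pow_ne_zero n (Nat.cast_ne_zero.2 (Fact.out : p.Prime).ne_zero)
  have hint := isIntegral_gaussSum_div_pow hl2 hr hp4 hord hn hcard hχ hχ2 hψ hψp
  have hint_inv := isIntegral_gaussSum_div_pow (χ := χ⁻¹) hl2 hr hp4 hord hn hcard
    (by rw [inv_pow, hχ, inv_one]) (by rwa [inv_pow, Ne, inv_eq_one]) hψ hψp
  obtain ⟨u, v, hu, hv⟩ :=
    exists_ratCast_eq_gaussSum_add_and_sub_mul hl4 hr hp4 hord hχ hχp hψp hs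
  have hadd : gaussSum χ ψ / (p : K) ^ n + gaussSum χ⁻¹ ψ / (p : K) ^ n =
      ((u / p ^ n : ℚ) : K) := by
    rw [← add_div, ← hu, Rat.cast_div, Rat.cast_pow, Rat.cast_natCast]
  have hsub : (gaussSum χ ψ / (p : K) ^ n - gaussSum χ⁻¹ ψ / (p : K) ^ n) * s =
      ((v / p ^ n : ℚ) : K) := by
    rw [← sub_div, div_mul_eq_mul_div, ← hv, Rat.cast_div, Rat.cast_pow, Rat.cast_natCast]
  have hmul : gaussSum χ ψ / (p : K) ^ n * (gaussSum χ⁻¹ ψ / (p : K) ^ n) =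
      ((p ^ (2 * n) : ℤ) : K) := by
    rw [div_mul_div_comm, gaussSum_mul_gaussSum_inv hχ1 hψ, mulChar_neg_one_eq_one hχp, hcard,
      div_eq_iff (mul_ne_zero hpn hpn)]
    push_cast
    ring
  obtain ⟨a, b, hab, hγ⟩ := exists_eq_add_mul_of_isIntegral
    (Nat.prime_iff_prime_int.1 (Fact.out : l.Prime)) (by lia) (by exact_mod_cast hs) hint hint_inv
    hadd hsub hmul
  exact ⟨a, b, hab, by rw [← hγ, mul_div_cancel₀ _ hpn]⟩

theorem gaussSum_traceChar_pow_eq_neg {F : Type*} [Field F] [Fintype F] [Algebra (ZMod p) F]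
    (hp4 : p % 4 = 3) (hcard : Fintype.card F = p ^ (4 * n)) {χ : MulChar F ℂ}
    (hχord : orderOf χ = 4 * l ^ r) :
    gaussSum (χ ^ l ^ r) (traceChar p F) = -(p : ℂ) ^ (2 * n) := by
  have hlr : l ^ r ≠ 0 := pow_ne_zero r (Fact.out : l.Prime).ne_zero
  have hord4 : orderOf (χ ^ l ^ r) = 4 := by
    rw [orderOf_pow_of_dvd hlr (hχord ▸ dvd_mul_left _ 4), hχord,
      Nat.mul_div_cancel _ (Nat.pos_of_ne_zero hlr)]
  refine gaussSum_traceChar_eq_neg_of_pow_eq_one p (by lia) hcard (fun h ↦ ?_)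
    (orderOf_dvd_iff_pow_eq_one.1 (hord4 ▸ (by lia : 4 ∣ p + 1)))
  rw [h, orderOf_one] at hord4
  norm_num at hord4

theorem int_modEq_of_gaussSum_traceChar_eq {F : Type*} [Field F] [Fintype F] [Algebra (ZMod p) F]
    (hpl : (p : ZMod l) ≠ 0) (hp4 : p % 4 = 3) (hcard : Fintype.card F = p ^ (4 * n))
    {χ : MulChar F ℂ} (hχord : orderOf χ = 4 * l ^ r) (hχl : χ l = 1) {s : ℂ} (hs : s ^ 2 = -l)
    {a b : ℤ} (hG : gaussSum χ (traceChar p F) = p ^ n * (a + b * s)) :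
    a ≡ -p ^ n [ZMOD l] := by
  have hlF : (l : F) ≠ 0 := fun h ↦ by
    rw [h, MulChar.map_zero] at hχl
    exact zero_ne_one hχl
  have hmod : p ^ n * a ≡ -p ^ (2 * n) [ZMOD l] :=
    int_modEq_of_gaussSum_eq (v := p ^ n * b) (r := r) hlF hχl hs
      (by rw [hG]; push_cast; ring)
      (by rw [gaussSum_traceChar_pow_eq_neg hp4 hcard hχord]; push_cast; rfl)
  rw [← ZMod.intCast_eq_intCast_iff] at hmod ⊢
  push_cast at hmod ⊢
  exact mul_left_cancel₀ (pow_ne_zero n hpl) (by rw [hmod]; ring)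

end MainCase

theorem statement13 (p l r N f : ℕ) (hp : p.Prime) (hl : l.Prime) (hl4 : l % 4 = 1)
    (hr : 1 ≤ r) (hN : N = 4 * l ^ r) (hNp : Nat.gcd N p = 1) (hp4 : p % 4 = 3)
    (hord : orderOf (p : ZMod (l ^ r)) = Nat.totient (l ^ r))
    (hf : orderOf (p : ZMod N) = f) (hind : f = Nat.totient N / 2)
    (F : Type) [Field F] [Fintype F] [Algebra (ZMod p) F]
    (hcard : Fintype.card F = p ^ f)
    (χ : MulChar F ℂ) (hχord : orderOf χ = N) :
    ∃ a b : ℤ,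
      a ^ 2 + (l : ℤ) * b ^ 2 = (p : ℤ) ^ (f / 2) ∧
      a ≡ -(p : ℤ) ^ (f / 4) [ZMOD (l : ℤ)] ∧
      gaussSumN p χ 1 = (p : ℂ) ^ ((f / 4 : ℕ)) * ((a : ℂ) + (b : ℂ) * sqrtNeg l) := by
  have : Fact p.Prime := ⟨hp⟩
  have : Fact l.Prime := ⟨hl⟩
  have : CharP F p := charP_of_injective_algebraMap (algebraMap (ZMod p) F).injective p
  have hr0 : r ≠ 0 := by lia
  have hl2 : l ≠ 2 := by lia
  subst hN
  obtain ⟨n, hn⟩ := four_dvd_totient_pow hl4 hr0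
  have hfn : f = 4 * n := by
    rw [hind, totient_four_mul_pow hl2 r, Nat.mul_div_cancel_left _ two_pos, hn]
  rw [hfn] at hcard
  rw [show f / 2 = 2 * n by lia, show f / 4 = n by lia, gaussSumN_one]
  have hχ : χ ^ (4 * l ^ r) = 1 := hχord ▸ pow_orderOf_eq_one χ
  have hχ2 : χ ^ 2 ≠ 1 := pow_ne_one_of_lt_orderOf two_ne_zero
    (by have := Nat.pow_pos (n := r) hl.pos; lia)
  have hpl : (p : ZMod l) ≠ 0 :=
    CharP.cast_ne_zero_of_ne_of_prime (ZMod l) hp (by lia)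
  have hlF : (l : F) ≠ 0 := CharP.cast_ne_zero_of_ne_of_prime F hl (by lia : p ≠ l)
  have hχl : χ l = 1 :=
    mulChar_natCast_eq_one_of_orderOf_eq_totient hl2 hr0 hp4 hord hn hcard hχ hlF
  obtain ⟨a, b, hab, hG⟩ := exists_gaussSum_eq_pow_mul_add hl4 hr0 hp4 hord hn hcard hχ hχ2
    (isPrimitive_traceChar p) (traceChar_pow_char p) (sqrtNeg_sq l)
  exact ⟨a, b, hab,
    int_modEq_of_gaussSum_traceChar_eq hpl hp4 hcard hχord hχl (sqrtNeg_sq l) hG, hG⟩
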